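/- Let 𝒰 ⊂ ℝ^m be a finite set with 0 ∈ 𝒰 such that 0 lies in the interior of the convex hull of 𝒰. Then there exists δ > 0 such that for every η ∈ ℝ^m with ‖η‖ > δ there exists u ∈ 𝒰 with ‖η − u‖ < ‖η‖. -/

import Mathlib

/-- Lemma 1 (second form): if `0 ∈ 𝒰` and `0` lies in the interior of the convex hull of the
finite set `𝒰 ⊂ ℝ^m`, then there is `δ > 0` such that any `η` with `‖η‖ > δ` admits a point
`u ∈ 𝒰` that strictly decreases the distance: `‖η − u‖ < ‖η‖`. -/
theorem exists_delta_nearest_neighbor_decrease (m : ℕ) (U : Finset (EuclideanSpace ℝ (Fin m)))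
    (h0U : (0 : EuclideanSpace ℝ (Fin m)) ∈ U)
    (h0int : (0 : EuclideanSpace ℝ (Fin m)) ∈ interior (convexHull ℝ (U : Set (EuclideanSpace ℝ (Fin m))))) :
    ∃ δ : ℝ, 0 < δ ∧
      ∀ η : EuclideanSpace ℝ (Fin m), ‖η‖ > δ → ∃ u ∈ U, ‖η - u‖ < ‖η‖ := by
  obtain ⟨r, hr, hball⟩ := Metric.nhds_basis_closedBall.mem_iff.1 (mem_interior_iff_mem_nhds.1 h0int)
  obtain ⟨S, hS0, hS⟩ : ∃ S : ℝ, 0 ≤ S ∧ ∀ u ∈ U, ‖u‖ ^ 2 ≤ S :=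
    ⟨∑ u ∈ U, ‖u‖ ^ 2, Finset.sum_nonneg fun u _ => sq_nonneg _, fun u hu =>
      Finset.single_le_sum (f := fun u => ‖u‖ ^ 2) (fun v _ => sq_nonneg _) hu⟩
  refine ⟨(S + 1) / (2 * r), by positivity, fun η hη => ?_⟩
  have hδ : 0 < (S + 1) / (2 * r) := by positivity
  have hηpos : 0 < ‖η‖ := lt_trans hδ hη
  have hlt : S + 1 < ‖η‖ * (2 * r) := (div_lt_iff₀ (by positivity)).1 hη
  by_contra! hcon
  have hsub : convexHull ℝ (U : Set (EuclideanSpace ℝ (Fin m))) ⊆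
      {x | inner ℝ η x ≤ S / 2} := by
    refine convexHull_min ?_ (convex_halfSpace_le (innerₛₗ ℝ η).isLinear _)
    intro u hu
    have h1 := hcon u hu
    have h2 : ‖u‖ ^ 2 ≤ S := hS u hu
    have h3 := norm_sub_sq_real η u
    have h4 : ‖η‖ ^ 2 ≤ ‖η - u‖ ^ 2 := by gcongr
    change inner ℝ η u ≤ S / 2
    linarith
  have hp : (r / ‖η‖) • η ∈ Metric.closedBall (0 : EuclideanSpace ℝ (Fin m)) r := by
    rw [mem_closedBall_zero_iff, norm_smul, Real.norm_of_nonneg (by positivity),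
      div_mul_cancel₀ _ hηpos.ne']
  have h5 : inner ℝ η ((r / ‖η‖) • η) ≤ S / 2 := hsub (hball hp)
  rw [inner_smul_right, real_inner_self_eq_norm_sq] at h5
  have h6 : r / ‖η‖ * ‖η‖ ^ 2 = r * ‖η‖ := by field_simp
  linarith
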